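/- For every positive integer n and all nonnegative integers j and k, the number of inversion tables e of length n with asc(e) = j and row(e) = k equals the number of inversion tables e of length n with asc(e) = k and row(e) = j; that is, the joint distribution of (asc, row) on inversion tables of length n is symmetric. -/

import Mathlib

/-!
The symmetry follows from the product formula
`∑ e, C(n + a - asc e, n) * C(n + b - row e, n) = multichoose ((a + 1) * (b + 1)) n`
(`sum_choose_mul_choose`), the sum being over all inversion tables of length `n`. Its right-hand
side is symmetric in `a` and `b`, and the matrix `C(n + x - j, n)`, `0 ≤ j, x < n`, is
unitriangular, so the numbers of tables with given `(asc, row)` are determined by these sums and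
inherit the symmetry (`eq_zero_of_sum_choose`, `count_comm`).

The formula is proved by induction on the number `a` of available labels. The binomial
`C(n + a - 1 - asc e, n)` counts the weakly increasing labelings of the positions of `e` by `a`
labels that increase strictly at each ascent (`ascWeight`). Removing the positions with the largest
label cuts `e` into an inversion table of length `m` followed by a weakly decreasing tail of some
length `c`, whose entries may be any weakly decreasing sequence in `{1, ..., m + 1}`
(`ascWeight_succ`, `sum_ascWeight_succ`). Summing the binomial in `row` over all such tails
gives the same binomial for the shorter table, times the factor `multichoose (b + 1) c`
(`decExt_binomial`): tails are counted by the number `t` of new values they introduce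
(`decExt_row`), and the resulting sum over `t` is a Riordan-type binomial identity
(`choose_identity`). Vandermonde convolution of the `multichoose` factors finishes the induction
(`sum_weights`).
-/


/-- The descent set of a permutation `π` of `{1,...,n}` (1-indexed):
`DES(π) = {i ∈ {1,...,n-1} : π_i > π_{i+1}}`.  Here `π_i` is `π ⟨i-1, _⟩`
since `Fin n` is 0-indexed. -/
def permDES (n : ℕ) (π : Equiv.Perm (Fin n)) : Finset ℕ :=
  (Finset.Ico 1 n).filter fun i =>
    ∃ h : i < n, ∃ h' : i - 1 < n, π ⟨i, h⟩ < π ⟨i - 1, h'⟩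

/-- `des(π)`, the number of descents of `π`. -/
def permDes (n : ℕ) (π : Equiv.Perm (Fin n)) : ℕ := (permDES n π).card

/-- `ides(π) = des(π⁻¹)`. -/
def permIdes (n : ℕ) (π : Equiv.Perm (Fin n)) : ℕ := permDes n π⁻¹

/-- `maj(π)`, the sum of the elements of `DES(π)`. -/
def permMaj (n : ℕ) (π : Equiv.Perm (Fin n)) : ℕ := ∑ i ∈ permDES n π, i

/-- An inversion table of length `n`: a sequence `e_1 … e_n` with `1 ≤ e_i ≤ i`.
The entry `e_i` (for `1 ≤ i ≤ n`) is `e.1 ⟨i-1, _⟩`. -/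
abbrev InvTable (n : ℕ) :=
  {e : Fin n → Fin (n + 1) // ∀ i : Fin n, 1 ≤ (e i : ℕ) ∧ (e i : ℕ) ≤ (i : ℕ) + 1}

/-- The ascent set `ASC(e) = {i ∈ {1,...,n-1} : e_i < e_{i+1}}`. -/
def invASC (n : ℕ) (e : InvTable n) : Finset ℕ :=
  (Finset.Ico 1 n).filter fun i =>
    ∃ h : i < n, ∃ h' : i - 1 < n, (e.1 ⟨i - 1, h'⟩ : ℕ) < (e.1 ⟨i, h⟩ : ℕ)

/-- `asc(e)`, the number of ascents of `e`. -/
def invAsc (n : ℕ) (e : InvTable n) : ℕ := (invASC n e).card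

/-- `ROW(e) = {e_i : 1 ≤ i ≤ n} \ {1}`. -/
def invROW (n : ℕ) (e : InvTable n) : Finset ℕ :=
  (Finset.image (fun i : Fin n => (e.1 i : ℕ)) Finset.univ) \ {1}

/-- `row(e) = #ROW(e)`. -/
def invRow (n : ℕ) (e : InvTable n) : ℕ := (invROW n e).card

/-- `amaj(e)`, the sum of the elements of `ASC(e)`. -/
def invAmaj (n : ℕ) (e : InvTable n) : ℕ := ∑ i ∈ invASC n e, i

open Finset

namespace DoubleEulerian

/-! ### Binomial identities -/

/-- Vandermonde convolution for multiset coefficients. -/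
theorem multichoose_add (u v n : ℕ) :
    ∑ p ∈ antidiagonal n, Nat.multichoose u p.1 * Nat.multichoose v p.2 =
      Nat.multichoose (u + v) n := by
  induction v generalizing n with
  | zero =>
    rw [sum_eq_single (n, 0)]
    · simp
    · rintro ⟨i, j⟩ h hne
      rcases j with _ | j
      · simp_all
      · simp
    · simp
  | succ v ih =>
    induction n with
    | zero => simp
    | succ n ihn =>
      rw [Finset.Nat.sum_antidiagonal_succ', ← add_assoc, Nat.multichoose_succ_succ,
        ← ih (n + 1), Finset.Nat.sum_antidiagonal_succ', add_assoc, add_assoc u v 1, ← ihn]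
      simp only [Nat.multichoose_succ_succ, mul_add, sum_add_distrib, Nat.multichoose_zero_right]

/-- A form of the Bizley-Riordan identity. Vandermonde expansion of the last factor, the subset
of a subset identity `Nat.choose_mul`, and two further Vandermonde summations reduce it to the
product on the right. -/
theorem choose_identity (q r c x : ℕ) :
    ∑ p ∈ antidiagonal c, q.choose p.1 * (c + r).choose p.2 *
        (x + q + c - p.1).choose (q + r + c) =
      (x + q).choose (q + r) * (x + c).choose c := by
  -- Expand the last factor by Vandermonde over `p.2 + (x + q)`.
  have h1 : ∀ p ∈ antidiagonal c, q.choose p.1 * (c + r).choose p.2 *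
        (x + q + c - p.1).choose (q + r + c) =
      ∑ j ∈ range (c + 1), q.choose (c - p.2) * (c + r).choose p.2 *
        (p.2.choose j * (x + q).choose (q + r + c - j)) := by
    rintro ⟨t, k⟩ h
    obtain rfl : t + k = c := by simpa using h
    have e : x + q + (t + k) - t = k + (x + q) := by omega
    simp only [e, Nat.add_choose_eq k (x + q), Nat.add_sub_cancel]
    rw [Finset.Nat.sum_antidiagonal_eq_sum_range_succ
      (fun i j => k.choose i * (x + q).choose j), ← mul_sum]
    congr 1
    symm
    apply sum_subset
    · intro a; simp; omega
    · intro a _ ha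
      rw [Nat.choose_eq_zero_of_lt (by simp at ha; omega : k < a)]; simp
  rw [sum_congr rfl h1, sum_comm]
  -- Below, `x - r` must be a genuine difference; for `x < r` both sides vanish.
  by_cases hrx : x < r
  · rw [Nat.choose_eq_zero_of_lt (by omega : x + q < q + r), zero_mul]
    refine sum_eq_zero fun j hj => sum_eq_zero fun p hp => ?_
    rw [Nat.choose_eq_zero_of_lt (by simp at hj; omega : x + q < q + r + c - j)]; simp
  push Not at hrx
  have h2 : ∀ j ∈ range (c + 1),
      ∑ p ∈ antidiagonal c, q.choose (c - p.2) * (c + r).choose p.2 *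
        (p.2.choose j * (x + q).choose (q + r + c - j)) =
      (x + q).choose (q + r) * ((c + r).choose j * (x - r).choose (c - j)) := by
    intro j hj
    obtain ⟨i, rfl⟩ : ∃ i, c = j + i := ⟨c - j, by simp at hj; omega⟩
    have e1 : q + r + (j + i) - j = q + r + i := by omega
    have e2 : j + i - j = i := by omega
    rw [e1, e2]
    -- Vandermonde, after `choose k j` is absorbed into `choose (c + r) k`.
    have h3 : ∑ p ∈ antidiagonal (j + i), q.choose (j + i - p.2) * (j + i + r).choose p.2 *
        p.2.choose j = (j + i + r).choose j * (q + r + i).choose i := by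
      rw [Finset.Nat.sum_antidiagonal_eq_sum_range_succ_mk, ← sum_range_reflect]
      have e3 : q + r + i = (i + r) + q := by omega
      rw [e3, Nat.add_choose_eq (i + r) q, Finset.Nat.sum_antidiagonal_eq_sum_range_succ_mk, mul_sum,
        show (j + i).succ = j + (i + 1) by omega, sum_range_add, sum_eq_zero, zero_add]
      · refine sum_congr rfl fun k hk => ?_
        have hk' : k ≤ i := by simp at hk; omega
        have a1 : j + i - (j + (i + 1) - 1 - (j + k)) = j + k := by omega
        simp only [a1]
        have a2 : j + i - (j + k) = i - k := by omega
        rw [a2, mul_assoc, Nat.choose_mul (by omega : j ≤ j + k)]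
        have a3 : j + i + r - j = i + r := by omega
        have a4 : j + k - j = k := by omega
        rw [a3, a4]; ring
      · intro k hk
        simp at hk
        rw [Nat.choose_eq_zero_of_lt (by omega : _ < j)]; simp
    simp only [← mul_assoc]
    rw [← sum_mul, h3]
    by_cases hi : x + q < q + r + i
    · rw [Nat.choose_eq_zero_of_lt hi, Nat.choose_eq_zero_of_lt (by omega : x - r < i)]; simp
    · have := Nat.choose_mul (n := x + q) (k := q + r + i) (s := q + r) (by omega)
      have a1 : x + q - (q + r) = x - r := by omega
      have a2 : q + r + i - (q + r) = i := by omega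
      rw [a1, a2] at this
      have a3 : (q + r + i).choose (q + r) = (q + r + i).choose i :=
        Nat.choose_symm_add
      rw [a3] at this
      linear_combination (j + i + r).choose j * this
  rw [sum_congr rfl h2, ← mul_sum]
  have e4 : x + c = (c + r) + (x - r) := by omega
  rw [e4, Nat.add_choose_eq (c + r) (x - r), Finset.Nat.sum_antidiagonal_eq_sum_range_succ_mk]

/-! ### Inversion tables as lists -/

/-- The sum of `F` over all inversion tables of length `n`, written as lists of entries in reverse
order: the head of the list is the last entry `e_n`. -/
def revTableSum : ℕ → (List ℕ → ℕ) → ℕ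
  | 0, F => F []
  | n + 1, F => revTableSum n fun l => ∑ x ∈ Icc 1 (n + 1), F (x :: l)

/-- The number of ascents of the sequence whose reversal is the given list. -/
def asc : List ℕ → ℕ
  | [] => 0
  | [_] => 0
  | x :: y :: l => (if y < x then 1 else 0) + asc (y :: l)

/-- The values occurring in the list, together with the value `1`, which `row` never counts. -/
def old (l : List ℕ) : Finset ℕ := insert 1 l.toFinset

/-- The number of distinct values other than `1` in the list. -/
def row (l : List ℕ) : ℕ := ((old l).erase 1).card

/-- `decExt h v c l` is the sum of `h` over all extensions of the table `l` by a weakly decreasing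
sequence of `c` further entries in `{1, ..., v}`. -/
def decExt (h : List ℕ → ℕ) : ℕ → ℕ → List ℕ → ℕ
  | _, 0, l => h l
  | v, c + 1, l => ∑ x ∈ Icc 1 v, decExt h x c (x :: l)

/-- Only lists of length `n` with entries in `{1, ..., n}` contribute to `revTableSum n`. -/
theorem revTableSum_congr {n : ℕ} {F G : List ℕ → ℕ}
    (h : ∀ l : List ℕ, l.length = n → (∀ x ∈ l, 1 ≤ x ∧ x ≤ n) → F l = G l) :
    revTableSum n F = revTableSum n G := by
  induction n generalizing F G with
  | zero => exact h [] rfl (by simp)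
  | succ n ih =>
    refine ih fun l hl hx => sum_congr rfl fun x hxm => h _ (by simp [hl]) ?_
    intro y hy
    rcases List.mem_cons.1 hy with rfl | hy
    · simpa using hxm
    · have := hx y hy; omega

theorem revTableSum_add (n : ℕ) (F G : List ℕ → ℕ) :
    revTableSum n (fun l => F l + G l) = revTableSum n F + revTableSum n G := by
  induction n generalizing F G with
  | zero => rfl
  | succ n ih => simp only [revTableSum, sum_add_distrib, ih]

theorem revTableSum_mul (n a : ℕ) (F : List ℕ → ℕ) :
    revTableSum n (fun l => F l * a) = revTableSum n F * a := by
  induction n generalizing F with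
  | zero => rfl
  | succ n ih => simp only [revTableSum, ← sum_mul, ih]

/-! ### Labelings and cutting off a weakly decreasing tail -/

/-- The number of weakly increasing labelings of the positions of `l` by `a` labels that increase
strictly at each ascent. For `a = 0` it is `1` on the empty list and `0` on all others, also with
truncated subtraction. -/
def ascWeight (a : ℕ) (l : List ℕ) : ℕ := (l.length + a - 1 - asc l).choose l.length

/-- The sum of `ascWeight a` over all proper prefixes of the table which are followed by a weakly
decreasing tail. In the reversed list these prefixes are proper suffixes. -/
def properCut (a : ℕ) : List ℕ → ℕ
  | [] => 0
  | [_] => ascWeight a []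
  | x :: y :: l => ascWeight a (y :: l) + if x ≤ y then properCut a (y :: l) else 0

theorem asc_cons_le (x : ℕ) (l : List ℕ) : asc (x :: l) ≤ l.length := by
  induction l generalizing x with
  | nil => simp [asc]
  | cons y l ih =>
    have := ih y
    simp only [asc, List.length_cons]
    split_ifs <;> omega

theorem ascWeight_zero_cons (x : ℕ) (l : List ℕ) : ascWeight 0 (x :: l) = 0 :=
  Nat.choose_eq_zero_of_lt (by simp only [List.length_cons]; omega)

theorem ascWeight_nil (a : ℕ) : ascWeight a [] = 1 := by simp [ascWeight]

theorem ascWeight_succ_cons (a x : ℕ) (l : List ℕ) :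
    ascWeight (a + 1) (x :: l) =
      ascWeight a (x :: l) + (l.length + a - asc (x :: l)).choose l.length := by
  have := asc_cons_le x l
  obtain ⟨d, hd⟩ : ∃ d, l.length + a = asc (x :: l) + d :=
    ⟨l.length + a - asc (x :: l), by omega⟩
  simp only [ascWeight, List.length_cons]
  have e1 : l.length + 1 + (a + 1) - 1 - asc (x :: l) = d + 1 := by omega
  have e2 : l.length + 1 + a - 1 - asc (x :: l) = d := by omega
  have e3 : l.length + a - asc (x :: l) = d := by omega
  rw [e1, e2, e3, Nat.choose_succ_succ, add_comm]

/-- Recursion on the number of labels: the positions with the largest label form a weakly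
decreasing tail. -/
theorem ascWeight_succ (a : ℕ) (l : List ℕ) :
    ascWeight (a + 1) l = ascWeight a l + properCut a l := by
  induction l with
  | nil => simp [ascWeight_nil, properCut]
  | cons x l ih =>
    rw [ascWeight_succ_cons]
    congr 1
    cases l with
    | nil => simp [properCut, ascWeight_nil]
    | cons y l =>
      simp only [properCut]
      split_ifs with h
      · rw [← ih]
        simp only [asc, ascWeight, if_neg (not_lt.2 h)]
        congr 1
        omega
      · simp only [asc, ascWeight, if_pos (not_le.1 h)]
        congr 1
        omega

/-- The sum of `h` over all extensions of a nonempty table by one entry that creates no ascent.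
The value at the empty list is irrelevant. -/
def appendDec (h : List ℕ → ℕ) : List ℕ → ℕ
  | [] => 0
  | y :: l => ∑ x ∈ Icc 1 y, h (x :: y :: l)

theorem decExt_appendDec_cons (h : List ℕ → ℕ) (y c : ℕ) (l : List ℕ) :
    decExt (appendDec h) y c (y :: l) = decExt h y (c + 1) (y :: l) := by
  induction c generalizing y l with
  | zero => rfl
  | succ c ih =>
    rw [decExt, decExt]
    exact sum_congr rfl fun x _ => ih x _

theorem decExt_appendDec (h : List ℕ → ℕ) (v c : ℕ) (l : List ℕ) :
    decExt (appendDec h) v (c + 1) l = decExt h v (c + 2) l := by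
  rw [decExt, decExt]
  exact sum_congr rfl fun x _ => decExt_appendDec_cons h x c l

/-- The sum over tables and their cuts is reorganized as a sum over a prefix and a nonempty weakly
decreasing tail. Replacing `h` by `appendDec h` removes the last entry of a tail of length at
least two, which drives the induction. -/
theorem sum_properCut (a n : ℕ) (h : List ℕ → ℕ) :
    revTableSum n (fun l => properCut a l * h l) =
      ∑ m ∈ range n, revTableSum m fun l => ascWeight a l * decExt h (m + 1) (n - m) l := by
  induction n generalizing h with
  | zero => simp [revTableSum, properCut]
  | succ n ih =>
    rw [sum_range_succ]
    have h1 : ∀ m ∈ range n,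
        (revTableSum m fun l => ascWeight a l * decExt h (m + 1) (n + 1 - m) l) =
        revTableSum m fun l => ascWeight a l * decExt (appendDec h) (m + 1) (n - m) l := by
      intro m hm
      obtain ⟨c, rfl⟩ : ∃ c, n = m + c + 1 := ⟨n - m - 1, by simp at hm; omega⟩
      -- The tail has positive length here, which the shift by `appendDec` requires.
      have e1 : m + c + 1 + 1 - m = c + 2 := by omega
      have e2 : m + c + 1 - m = c + 1 := by omega
      simp only [e1, e2, decExt_appendDec]
    rw [sum_congr rfl h1, ← ih, ← revTableSum_add, revTableSum]
    refine revTableSum_congr fun l _ hl => ?_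
    have e : n + 1 - n = 1 := by omega
    rw [e, decExt]
    simp only [decExt]
    cases l with
    | nil => simp [properCut, mul_sum]
    | cons y l =>
      have hy : y ≤ n := (hl y (by simp)).2
      simp only [properCut, add_mul, sum_add_distrib, ite_mul, zero_mul, ← sum_filter, appendDec,
        ← mul_sum]
      rw [add_comm]
      congr 2
      -- The last entry `y` is at most `n`, so `x ≤ y` already implies `x ≤ n + 1`.
      refine sum_congr ?_ fun _ _ => rfl
      ext z
      simp only [mem_filter, mem_Icc]
      omega

theorem sum_ascWeight_succ (a n : ℕ) (h : List ℕ → ℕ) :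
    revTableSum n (fun l => ascWeight (a + 1) l * h l) =
      ∑ p ∈ antidiagonal n,
        revTableSum p.1 fun l => ascWeight a l * decExt h (p.1 + 1) p.2 l := by
  simp only [ascWeight_succ, add_mul]
  rw [revTableSum_add, sum_properCut, Finset.Nat.sum_antidiagonal_eq_sum_range_succ_mk,
    sum_range_succ, add_comm]
  simp [decExt]

/-! ### Summation over weakly decreasing tails -/

theorem old_cons_of_mem {x : ℕ} {l : List ℕ} (h : x ∈ old l) : old (x :: l) = old l := by
  ext y
  simp only [old, List.toFinset_cons, mem_insert] at h ⊢
  grind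

theorem old_cons (x : ℕ) (l : List ℕ) : old (x :: l) = insert x (old l) := by
  ext y
  simp only [old, List.toFinset_cons, mem_insert]
  tauto

theorem one_mem_old (l : List ℕ) : 1 ∈ old l := by simp [old]

theorem row_cons_of_notMem {x : ℕ} {l : List ℕ} (h : x ∉ old l) : row (x :: l) = row l + 1 := by
  have := one_mem_old l
  rw [row, row, old_cons, erase_insert_of_ne (by rintro rfl; exact h this), card_insert_of_notMem]
  simp [h]

theorem decExt_zero (h : List ℕ → ℕ) (v : ℕ) (l : List ℕ) : decExt h v 0 l = h l := by
  rw [decExt]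

/-- Either no entry of the tail equals `v + 1`, or its first entry does. -/
theorem decExt_succ_succ (h : List ℕ → ℕ) (v c : ℕ) (l : List ℕ) :
    decExt h (v + 1) (c + 1) l = decExt h v (c + 1) l + decExt h (v + 1) c ((v + 1) :: l) := by
  rw [decExt, sum_Icc_succ_top (by omega), ← decExt]

/-- A function of `row`, summed over weakly decreasing tails: the tails with exactly `p.1` new values
are obtained by choosing these values and then a multiset of size `p.2 = c - p.1` from the chosen
new values and the old values in `{1, ..., v}`. -/
theorem decExt_row (g : ℕ → ℕ) (v c : ℕ) (l : List ℕ) :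
    decExt (fun l => g (row l)) v c l =
      ∑ p ∈ antidiagonal c, (Icc 1 v \ old l).card.choose p.1 *
        (c + (Icc 1 v ∩ old l).card - 1).choose p.2 * g (row l + p.1) := by
  induction v generalizing c l with
  | zero =>
    cases c with
    | zero => simp [decExt_zero]
    | succ c =>
      rw [decExt]
      symm
      refine (sum_eq_zero ?_).trans (by simp)
      rintro ⟨t, k⟩ hp
      rcases t with _ | t
      · obtain rfl : k = c + 1 := by simpa using hp
        simp
      · simp
  | succ v ihv =>
    induction c generalizing l with
    | zero => simp [decExt_zero]
    | succ c ihc =>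
      have hI : Icc 1 (v + 1) = insert (v + 1) (Icc 1 v) := by
        ext; simp only [mem_Icc, mem_insert]; omega
      have hv : v + 1 ∉ Icc 1 v := by simp
      rw [decExt_succ_succ, ihv, ihc, old_cons]
      -- The Pascal recursion is applied to the second binomial if the value `v + 1` is old,
      -- and to the first one if it is new.
      by_cases hm : v + 1 ∈ old l
      · have hr : row ((v + 1) :: l) = row l := by rw [row, row, old_cons_of_mem hm]
        have hq : Icc 1 (v + 1) \ old l = Icc 1 v \ old l := by
          rw [hI, insert_sdiff_of_mem _ hm]
        have hp : (Icc 1 (v + 1) ∩ old l).card = (Icc 1 v ∩ old l).card + 1 := by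
          rw [hI, insert_inter_of_mem hm, card_insert_of_notMem (by simp)]
        rw [insert_eq_of_mem hm, hr, hq, hp]
        generalize (Icc 1 v ∩ old l).card = p
        generalize (Icc 1 v \ old l).card = q
        have e1 : c + 1 + p - 1 = c + p := by omega
        have e2 : c + (p + 1) - 1 = c + p := by omega
        have e3 : c + 1 + (p + 1) - 1 = c + p + 1 := by omega
        rw [e1, e2, e3, Finset.Nat.sum_antidiagonal_succ', Finset.Nat.sum_antidiagonal_succ',
          add_assoc, ← sum_add_distrib]
        congr 1
        · simp
        · refine sum_congr rfl fun s _ => ?_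
          simp only [Nat.choose_succ_succ]
          ring
      · have hr : row ((v + 1) :: l) = row l + 1 := row_cons_of_notMem hm
        have hq : Icc 1 (v + 1) \ insert (v + 1) (old l) = Icc 1 v \ old l := by
          ext z; simp only [mem_sdiff, mem_insert, mem_Icc]; grind
        have hp : (Icc 1 (v + 1) ∩ insert (v + 1) (old l)).card =
            (Icc 1 v ∩ old l).card + 1 := by
          rw [hI, ← insert_inter_distrib, card_insert_of_notMem (by simp)]
        have hq' : (Icc 1 (v + 1) \ old l).card = (Icc 1 v \ old l).card + 1 := by
          rw [hI, insert_sdiff_of_notMem _ hm, card_insert_of_notMem (by simp)]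
        have hp' : Icc 1 (v + 1) ∩ old l = Icc 1 v ∩ old l := by
          rw [hI, insert_inter_of_notMem hm]
        rw [hr, hq, hp, hq', hp']
        generalize (Icc 1 v ∩ old l).card = p
        generalize (Icc 1 v \ old l).card = q
        have e1 : c + 1 + p - 1 = c + p := by omega
        have e2 : c + (p + 1) - 1 = c + p := by omega
        rw [e1, e2, Finset.Nat.sum_antidiagonal_succ, Finset.Nat.sum_antidiagonal_succ,
          add_assoc, ← sum_add_distrib]
        congr 1
        · simp
        · refine sum_congr rfl fun s _ => ?_
          simp only [Nat.choose_succ_succ, add_assoc, add_comm 1 s.1]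
          ring

/-- For `v = m + 1` the old values all lie in `{1, ..., v}`, and the sum over tails has a product
form. -/
theorem decExt_binomial (b m c : ℕ) (l : List ℕ) (hl : ∀ x ∈ l, 1 ≤ x ∧ x ≤ m) :
    decExt (fun l => (m + c + b - row l).choose (m + c)) (m + 1) c l =
      (m + b - row l).choose m * Nat.multichoose (b + 1) c := by
  have hsub : old l ⊆ Icc 1 (m + 1) := by
    intro x hx
    simp only [old, mem_insert, List.mem_toFinset, mem_Icc] at hx ⊢
    rcases hx with rfl | hx
    · omega
    · have := hl x hx; omega
  have hcard : (old l).card = row l + 1 := by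
    rw [row, card_erase_of_mem (one_mem_old l)]
    have := card_pos.2 ⟨_, one_mem_old l⟩
    omega
  have hle := card_le_card hsub
  rw [Nat.card_Icc, hcard] at hle
  rw [decExt_row (fun r => (m + c + b - r).choose (m + c)), card_sdiff_of_subset hsub,
    inter_eq_right.2 hsub, Nat.card_Icc, hcard]
  generalize row l = r at *
  obtain ⟨q, rfl⟩ : ∃ q, m = q + r := ⟨m - r, by omega⟩
  have e1 : q + r + 1 + 1 - 1 - (r + 1) = q := by omega
  have e2 : c + (r + 1) - 1 = c + r := by omega
  have e3 : ∀ t, q + r + c + b - (r + t) = b + q + c - t := by intro t; omega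
  have e4 : q + r + b - r = b + q := by omega
  simp only [e1, e2, e3, e4]
  rw [Nat.multichoose_eq, choose_identity]
  congr 2
  omega

theorem sum_weights (a b n : ℕ) :
    revTableSum n (fun l => ascWeight a l * (n + b - row l).choose n) =
      Nat.multichoose (a * (b + 1)) n := by
  induction a generalizing n with
  | zero =>
    rcases n with _ | n
    · simp [revTableSum, ascWeight_nil]
    · simp [revTableSum, ascWeight_zero_cons]
      have := revTableSum_mul n 0 fun _ => 0
      simpa using this
  | succ a ih =>
    rw [sum_ascWeight_succ, add_mul, one_mul, ← multichoose_add]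
    refine sum_congr rfl ?_
    rintro ⟨m, c⟩ hp
    obtain rfl : m + c = n := by simpa using hp
    rw [← ih, ← revTableSum_mul]
    refine revTableSum_congr fun l _ hl => ?_
    simp only
    rw [decExt_binomial b m c l hl, mul_assoc]

/-! ### Transfer to `InvTable` -/

theorem sum_piFinset (n : ℕ) (F : List ℕ → ℕ) :
    ∑ f ∈ Fintype.piFinset (fun i : Fin n => Icc 1 ((i : ℕ) + 1)), F (List.ofFn f).reverse =
      revTableSum n F := by
  induction n generalizing F with
  | zero => simp [revTableSum]
  | succ n ih =>
    rw [revTableSum, ← ih, sum_sigma']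
    refine sum_nbij' (fun f => ⟨fun i => f i.castSucc, f (Fin.last n)⟩)
      (fun s => Fin.snoc (α := fun _ => ℕ) s.1 s.2) ?_ ?_ ?_ ?_ ?_
    · intro f hf
      simp only [Fintype.mem_piFinset, mem_sigma] at hf ⊢
      exact ⟨fun i => by simpa using hf i.castSucc, by simpa using hf (Fin.last n)⟩
    · rintro ⟨f, x⟩ hf
      simp only [Fintype.mem_piFinset, mem_sigma] at hf ⊢
      intro i
      refine Fin.lastCases ?_ (fun i => ?_) i
      · simpa using hf.2
      · simpa using hf.1 i
    · intro f _
      funext i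
      refine Fin.lastCases ?_ (fun i => ?_) i <;> simp
    · rintro ⟨f, x⟩ _
      simp
    · intro f _
      rw [List.ofFn_succ']
      simp

/-- The entries of an inversion table as a list, last entry first. -/
def revList {n : ℕ} (e : InvTable n) : List ℕ := (List.ofFn fun i => (e.1 i : ℕ)).reverse

theorem sum_invTable (n : ℕ) (F : List ℕ → ℕ) :
    ∑ e : InvTable n, F (revList e) = revTableSum n F := by
  rw [← sum_piFinset]
  refine sum_bij (fun e _ i => (e.1 i : ℕ)) ?_ ?_ ?_ ?_
  · intro e _
    simpa using e.2
  · intro e _ e' _ h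
    ext i
    exact congrFun h i
  · intro f hf
    simp only [Fintype.mem_piFinset, mem_Icc] at hf
    exact ⟨⟨fun i => ⟨f i, by have := hf i; omega⟩, hf⟩, mem_univ _, rfl⟩
  · intro e _
    rfl

theorem asc_reverse_ofFn (n : ℕ) (f : Fin n → ℕ) :
    asc (List.ofFn f).reverse = ((Ico 1 n).filter fun i =>
      ∃ h : i < n, ∃ h' : i - 1 < n, f ⟨i - 1, h'⟩ < f ⟨i, h⟩).card := by
  induction n with
  | zero => simp [asc]
  | succ n ih =>
    rcases n with _ | n
    · simp [asc]
    · have hI : Ico 1 (n + 1 + 1) = insert (n + 1) (Ico 1 (n + 1)) := by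
        ext; simp only [mem_Ico, mem_insert]; omega
      have ih' := ih fun i => f i.castSucc
      have hf : ((Ico 1 (n + 1)).filter fun i => ∃ h : i < n + 1 + 1, ∃ h' : i - 1 < n + 1 + 1,
            f ⟨i - 1, h'⟩ < f ⟨i, h⟩) =
          (Ico 1 (n + 1)).filter fun i => ∃ h : i < n + 1, ∃ h' : i - 1 < n + 1,
            f (Fin.castSucc ⟨i - 1, h'⟩) < f (Fin.castSucc ⟨i, h⟩) := by
        refine filter_congr fun i hi => ?_
        simp only [mem_Ico] at hi
        constructor
        · rintro ⟨_, _, h⟩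
          exact ⟨hi.2, by omega, h⟩
        · rintro ⟨_, _, h⟩
          exact ⟨by omega, by omega, h⟩
      rw [hI, filter_insert, hf]
      rw [List.ofFn_succ'] at ih' ⊢
      rw [List.ofFn_succ']
      simp only [List.concat_eq_append, List.reverse_append, List.reverse_cons, List.reverse_nil,
        List.nil_append, List.singleton_append, asc] at ih' ⊢
      rw [ih']
      have hlt : (∃ h : n + 1 < n + 1 + 1, ∃ h' : n + 1 - 1 < n + 1 + 1,
          f ⟨n + 1 - 1, h'⟩ < f ⟨n + 1, h⟩) ↔ f (Fin.last n).castSucc < f (Fin.last (n + 1)) :=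
        ⟨fun ⟨_, _, h⟩ => h, fun h => ⟨by omega, by omega, h⟩⟩
      simp only [hlt]
      split_ifs
      · rw [card_insert_of_notMem (by simp), add_comm]
      · rw [zero_add]

theorem asc_revList {n : ℕ} (e : InvTable n) : asc (revList e) = invAsc n e :=
  asc_reverse_ofFn n _

theorem row_revList {n : ℕ} (e : InvTable n) : row (revList e) = invRow n e := by
  rw [row, invRow, invROW]
  congr 1
  ext x
  simp only [revList, old, mem_erase, mem_insert, List.mem_toFinset, List.mem_reverse,
    List.mem_ofFn, mem_sdiff, mem_image, mem_univ, true_and, mem_singleton]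
  tauto

/-! ### The product formula and its inversion -/

theorem sum_choose_mul_choose (n a b : ℕ) :
    ∑ e : InvTable n, (n + a - invAsc n e).choose n * (n + b - invRow n e).choose n =
      Nat.multichoose ((a + 1) * (b + 1)) n := by
  rw [← sum_weights, ← sum_invTable]
  refine sum_congr rfl fun e _ => ?_
  rw [ascWeight, asc_revList, row_revList]
  simp [revList]

/-- The matrix `choose (n + x - j) n` with `x, j < n` vanishes for `j > x` and is `1` for `j = x`,
hence it is invertible. -/
theorem eq_zero_of_sum_choose {n : ℕ} {g : ℕ → ℤ}
    (h : ∀ x, ∑ j ∈ range n, g j * ((n + x - j).choose n : ℤ) = 0) :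
    ∀ j < n, g j = 0 := by
  intro j
  induction j using Nat.strong_induction_on with
  | _ j ih =>
    intro hj
    have := h j
    rw [sum_eq_single j] at this
    · simpa using this
    · intro i hi hne
      simp only [mem_range] at hi
      rcases lt_or_gt_of_ne hne with hlt | hgt
      · rw [ih i hlt hi, zero_mul]
      · rw [Nat.choose_eq_zero_of_lt (by omega)]; simp
    · simp [hj]

theorem invAsc_lt {n : ℕ} (hn : 0 < n) (e : InvTable n) : invAsc n e < n := by
  have : invAsc n e ≤ (Ico 1 n).card := card_filter_le _ _
  rw [Nat.card_Ico] at this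
  omega

theorem invRow_lt {n : ℕ} (hn : 0 < n) (e : InvTable n) : invRow n e < n := by
  have : invROW n e ⊆ Ioc 1 n := by
    intro x hx
    simp only [invROW, mem_sdiff, mem_image, mem_univ, true_and, mem_singleton] at hx
    obtain ⟨⟨i, rfl⟩, h⟩ := hx
    have := e.2 i
    rw [mem_Ioc]
    omega
  have := card_le_card this
  rw [Nat.card_Ioc] at this
  rw [invRow]
  omega

/-- The number of inversion tables with `asc = j` and `row = k`. -/
def count (n j k : ℕ) : ℕ :=
  (univ.filter fun e : InvTable n => invAsc n e = j ∧ invRow n e = k).card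

/-- The product formula, with inversion tables grouped by `(asc, row)`. -/
theorem count_transform {n : ℕ} (hn : 0 < n) (a b : ℕ) :
    ∑ j ∈ range n, ∑ k ∈ range n,
      count n j k * ((n + a - j).choose n * (n + b - k).choose n) =
      Nat.multichoose ((a + 1) * (b + 1)) n := by
  rw [← sum_choose_mul_choose, ← sum_product',
    ← sum_fiberwise_of_maps_to (s := univ) (t := range n ×ˢ range n)
      (g := fun e : InvTable n => (invAsc n e, invRow n e))
      (fun e _ => by simp [invAsc_lt hn, invRow_lt hn])]
  refine sum_congr rfl fun p _ => ?_
  rw [sum_congr rfl (g := fun _ => (n + a - p.1).choose n * (n + b - p.2).choose n), sum_const,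
    smul_eq_mul, count]
  · simp only [Prod.ext_iff]
  · intro e he
    obtain ⟨h1, h2⟩ : invAsc n e = p.1 ∧ invRow n e = p.2 := by simpa [Prod.ext_iff] using he
    rw [h1, h2]

theorem count_comm {n : ℕ} (hn : 0 < n) (j k : ℕ) : count n j k = count n k j := by
  by_cases hjk : j < n ∧ k < n
  · have key : ∀ j < n, ∀ k < n, (count n j k : ℤ) - count n k j = 0 := by
      intro j hj k hk
      refine eq_zero_of_sum_choose (g := fun k => (count n j k : ℤ) - count n k j)
        (fun b => ?_) k hk
      refine eq_zero_of_sum_choose (g := fun j => ∑ k ∈ range n,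
        ((count n j k : ℤ) - count n k j) * ((n + b - k).choose n : ℤ)) (fun a => ?_) j hj
      -- The right-hand side of `count_transform` is symmetric in `a` and `b`.
      have h1 := congrArg (Nat.cast (R := ℤ)) (count_transform hn a b)
      have h2 := congrArg (Nat.cast (R := ℤ)) (count_transform hn b a)
      rw [mul_comm (b + 1), ← h1, sum_comm] at h2
      push_cast at h2
      rw [← sub_eq_zero, ← sum_sub_distrib] at h2
      rw [← neg_eq_zero, ← h2, ← sum_neg_distrib]
      refine sum_congr rfl fun j _ => ?_
      rw [← sum_sub_distrib, sum_mul, ← sum_neg_distrib]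
      refine sum_congr rfl fun k _ => ?_
      ring
    have := key j hjk.1 k hjk.2
    omega
  · have hz : ∀ e : InvTable n, ¬ (invAsc n e = j ∧ invRow n e = k) ∧
        ¬ (invAsc n e = k ∧ invRow n e = j) := by
      intro e
      have := invAsc_lt hn e
      have := invRow_lt hn e
      omega
    simp [count, hz]

end DoubleEulerian

/-- The joint distribution of `(asc, row)` on inversion tables of length `n`
is symmetric. -/
theorem asc_row_symmetric (n : ℕ) (hn : 0 < n) (j k : ℕ) :
    (Finset.univ.filter
      (fun e : InvTable n => invAsc n e = j ∧ invRow n e = k)).card =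
    (Finset.univ.filter
      (fun e : InvTable n => invAsc n e = k ∧ invRow n e = j)).card :=
  DoubleEulerian.count_comm hn j k
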